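/- Let k ≥ 2 and suppose g is k times continuously differentiable (C^k). Then for every point (x,t) ∈ ℝⁿ × (0,∞) with (x,t) ∉ Σ ∪ T₁ ∪ P⁰, there exists an open neighborhood U ⊂ ℝⁿ × (0,∞) of (x,t) such that u is C^k on U. -/

import Mathlib

open scoped InnerProductSpace Topology ENNReal
open Filter

noncomputable section

/-- Euclidean space `ℝⁿ`. -/
abbrev Euc (n : ℕ) := EuclideanSpace ℝ (Fin n)

/-- Hopf–Lax solution of the Eikonal equation `uₜ + |∇u| = 0` with initial data `g`:
`u(x,t) = min {g(y) : |y - x| ≤ t}`. -/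
def HLu {n : ℕ} (g : Euc n → ℝ) (x : Euc n) (t : ℝ) : ℝ :=
  sInf (g '' Metric.closedBall x t)

/-- The set of minimizers `L(x,t) = {y : |y - x| ≤ t ∧ g y = u(x,t)}`. -/
def HLL {n : ℕ} (g : Euc n → ℝ) (x : Euc n) (t : ℝ) : Set (Euc n) :=
  {y | ‖y - x‖ ≤ t ∧ g y = HLu g x t}

/-- The characteristic from `y₀`: `X(y₀,t) = y₀ + t • Dg(y₀)/|Dg(y₀)|`. -/
def charX {n : ℕ} (Dg : Euc n → Euc n) (y₀ : Euc n) (t : ℝ) : Euc n :=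
  y₀ + t • (‖Dg y₀‖⁻¹ • Dg y₀)

/-- First termination time `t̄ₛ(y₀) = sup {t > 0 : L(X(y₀,t),t) = {y₀}}`, in `[0,∞]`
(`sup ∅ = 0`). -/
def tbar {n : ℕ} (g : Euc n → ℝ) (Dg : Euc n → Euc n) (y₀ : Euc n) : ℝ≥0∞ :=
  sSup (ENNReal.ofReal '' {t : ℝ | 0 < t ∧ HLL g (charX Dg y₀ t) t = {y₀}})

/-- Second termination time `tₛ(y₀) = inf {t > 0 : y₀ ∉ L(X(y₀,t),t)}`, in `[0,∞]`
(`inf ∅ = ∞`). -/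
def tsnd {n : ℕ} (g : Euc n → ℝ) (Dg : Euc n → Euc n) (y₀ : Euc n) : ℝ≥0∞ :=
  sInf (ENNReal.ofReal '' {t : ℝ | 0 < t ∧ y₀ ∉ HLL g (charX Dg y₀ t) t})

/-- The set `Σ` of points of `ℝⁿ × (0,∞)` at which `u` is not Fréchet differentiable. -/
def SigmaSet {n : ℕ} (g : Euc n → ℝ) : Set (Euc n × ℝ) :=
  {p | 0 < p.2 ∧ ¬ DifferentiableAt ℝ (fun q : Euc n × ℝ => HLu g q.1 q.2) p}

/-- `T(M)`: the set of termination points of characteristics from points with `Dg ≠ 0`. -/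
def TM {n : ℕ} (g : Euc n → ℝ) (Dg : Euc n → Euc n) : Set (Euc n × ℝ) :=
  {p | ∃ y₀ : Euc n, ∃ t : ℝ, Dg y₀ ≠ 0 ∧ tbar g Dg y₀ < ⊤ ∧ 0 < t ∧
    tbar g Dg y₀ ≤ ENNReal.ofReal t ∧ ENNReal.ofReal t ≤ tsnd g Dg y₀ ∧
    p = (charX Dg y₀ t, t)}

/-- `T₁`: the points of `T(M)` having a unique minimizer. -/
def T1 {n : ℕ} (g : Euc n → ℝ) (Dg : Euc n → Euc n) : Set (Euc n × ℝ) :=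
  {p ∈ TM g Dg | ∃ y : Euc n, HLL g p.1 p.2 = {y}}

/-- Termination time `tₛ(y₀,P) = inf {t > 0 : y₀ ∉ L(y₀ + tP, t)}`, in `[0,∞]`. -/
def tsP {n : ℕ} (g : Euc n → ℝ) (y₀ P : Euc n) : ℝ≥0∞ :=
  sInf (ENNReal.ofReal '' {t : ℝ | 0 < t ∧ y₀ ∉ HLL g (y₀ + t • P) t})

/-- The set `P⁰` of points on effective characteristics of unit speed emanating from
points where `Dg = 0`. -/
def P0set {n : ℕ} (g : Euc n → ℝ) (Dg : Euc n → Euc n) : Set (Euc n × ℝ) :=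
  {p | ∃ y₀ P : Euc n, ∃ t : ℝ, Dg y₀ = 0 ∧ ‖P‖ = 1 ∧ 0 < t ∧
    ENNReal.ofReal t ≤ tsP g y₀ P ∧ p = (y₀ + t • P, t)}

/-!
At a point `(x, t)` where `u` is differentiable, every minimizer `y` satisfies
`Dg y = ∇ₓu(x, t)`.

If this common gradient vanishes, then off `P⁰` no minimizer lies on the sphere `|y - x| = t`, and
`u` is constant near `(x, t)`.

If it does not vanish, then `x = X(y, t)` determines the minimizer `y`, and off `T₁` the point `y`
still minimizes `g` over the larger ball of some radius `s > t` touching at `y`. The second-order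
condition on the sphere of radius `s` bounds `D²g(y)` on the tangent space below by `-|Dg(y)| / s`,
whereas the characteristic flow `(y, t) ↦ (X(y, t), t)` degenerates only in a direction where
`D²g(y)` equals `-|Dg(y)| / t`. The flow is therefore a local `C^(k-1)` diffeomorphism, the
minimizer is a `C^(k-1)` function of `(x, t)`, and so is `Du = (Dg, -|Dg|)` evaluated at it.
-/

theorem deriv_deriv_nonneg_of_isLocalMin {f : ℝ → ℝ} {a : ℝ} (hmin : IsLocalMin f a)
    (hf : ContinuousAt f a) : 0 ≤ deriv (deriv f) a := by
  by_contra! hneg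
  have hmax : IsLocalMax f a := isLocalMax_of_deriv_deriv_neg hneg hmin.deriv_eq_zero hf
  have hconst : f =ᶠ[𝓝 a] fun _ => f a := by
    filter_upwards [hmin, hmax] with e hge hle using le_antisymm hle hge
  have hzero : deriv (deriv f) a = 0 := by
    rw [hconst.deriv.deriv_eq]
    simp
  exact hneg.ne hzero

theorem exists_contDiffAt_eventually_leftInverse {E : Type*} [NormedAddCommGroup E]
    [NormedSpace ℝ E] [FiniteDimensional ℝ E] {m : WithTop ℕ∞} (hm : m ≠ 0) {f : E → E} {a : E}
    (hf : ContDiffAt ℝ m f a) (hinj : Function.Injective (fderiv ℝ f a)) :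
    ∃ ψ : E → E, ContDiffAt ℝ m ψ (f a) ∧ ψ (f a) = a ∧ ∀ᶠ w in 𝓝 a, ψ (f w) = w := by
  have : CompleteSpace E := FiniteDimensional.complete ℝ E
  let e : E ≃L[ℝ] E :=
    (LinearEquiv.ofInjectiveEndo (fderiv ℝ f a).toLinearMap hinj).toContinuousLinearEquiv
  have he : HasFDerivAt f (e : E →L[ℝ] E) a := (hf.differentiableAt hm).hasFDerivAt
  exact ⟨hf.localInverse he hm, hf.to_localInverse he hm, hf.localInverse_apply_image he hm,
    (hf.hasStrictFDerivAt' he hm).eventually_left_inverse⟩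

section Gradient

variable {E : Type*} [NormedAddCommGroup E] [InnerProductSpace ℝ E] [CompleteSpace E]
  {f : E → ℝ} {Df : E → E}

theorem continuous_of_hasGradientAt (hf : ∀ y, HasGradientAt f (Df y) y) : Continuous f :=
  continuous_iff_continuousAt.2 fun y => (hf y).continuousAt

theorem contDiff_gradient_of_contDiff_succ {m : WithTop ℕ∞} (hfm : ContDiff ℝ (m + 1) f)
    (hf : ∀ y, HasGradientAt f (Df y) y) : ContDiff ℝ m Df := by
  have hDf : Df = (InnerProductSpace.toDual ℝ E).symm ∘ fderiv ℝ f :=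
    funext fun y => by simp [(hf y).hasFDerivAt.fderiv]
  rw [hDf]
  exact (InnerProductSpace.toDual ℝ E).symm.contDiff.comp (hfm.fderiv_right le_rfl)

end Gradient

section Normalize

variable {E : Type*} [NormedAddCommGroup E] [InnerProductSpace ℝ E] {x : E}

theorem inner_normalize_self (x : E) : ⟪x, NormedSpace.normalize x⟫_ℝ = ‖x‖ := by
  by_cases hx : x = 0
  · simp [hx]
  · rw [NormedSpace.normalize, real_inner_smul_right, real_inner_self_eq_norm_sq]
    field_simp [norm_ne_zero_iff.2 hx]

theorem contDiffAt_normalize {m : WithTop ℕ∞} (hx : x ≠ 0) :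
    ContDiffAt ℝ m (NormedSpace.normalize : E → E) x :=
  ((contDiffAt_norm ℝ hx).inv (norm_ne_zero_iff.2 hx)).smul contDiffAt_id

theorem hasFDerivAt_norm (hx : x ≠ 0) :
    HasFDerivAt (fun z : E => ‖z‖) (innerSL ℝ (NormedSpace.normalize x)) x := by
  have hsqrt := (hasStrictFDerivAt_norm_sq x).hasFDerivAt.sqrt
    (pow_ne_zero 2 (norm_ne_zero_iff.2 hx))
  simp only [Real.sqrt_sq (norm_nonneg _)] at hsqrt
  refine hsqrt.congr_fderiv (ContinuousLinearMap.ext fun v => ?_)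
  simp only [NormedSpace.normalize, smul_apply, innerSL_apply_apply,
    real_inner_smul_left, smul_eq_mul, nsmul_eq_mul, Nat.cast_ofNat]
  ring

theorem hasFDerivAt_normalize (hx : x ≠ 0) :
    HasFDerivAt (NormedSpace.normalize : E → E)
      (‖x‖⁻¹ • (.id ℝ E -
        (innerSL ℝ (NormedSpace.normalize x)).smulRight (NormedSpace.normalize x))) x := by
  have hinv := (hasDerivAt_inv (norm_ne_zero_iff.2 hx)).comp_hasFDerivAt x (hasFDerivAt_norm hx)
  refine (hinv.smul (hasFDerivAt_id x)).congr_fderiv (ContinuousLinearMap.ext fun v => ?_)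
  simp only [NormedSpace.normalize, Function.comp_apply, id_eq, add_apply, sub_apply,
    smul_apply, ContinuousLinearMap.smulRight_apply, ContinuousLinearMap.id_apply,
    innerSL_apply_apply, real_inner_smul_left, smul_eq_mul]
  match_scalars <;> ring

theorem fderiv_normalize_comp_apply {F : Type*} [NormedAddCommGroup F] [NormedSpace ℝ F]
    {f : F → E} {z v : F} (hf : DifferentiableAt ℝ f z) (hz : f z ≠ 0) :
    fderiv ℝ (fun z => NormedSpace.normalize (f z)) z v = ‖f z‖⁻¹ • (fderiv ℝ f z v -
      ⟪NormedSpace.normalize (f z), fderiv ℝ f z v⟫_ℝ • NormedSpace.normalize (f z)) :=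
  congrArg (· v) ((hasFDerivAt_normalize hz).comp z hf.hasFDerivAt).fderiv

end Normalize

section Minimizers

variable {E : Type*} [NormedAddCommGroup E] [InnerProductSpace ℝ E]

theorem norm_sin_smul_sub_cos_smul {a w : E} (hw : ⟪a, w⟫_ℝ = 0) (hnorm : ‖w‖ = ‖a‖) (e : ℝ) :
    ‖Real.sin e • w - Real.cos e • a‖ = ‖a‖ := by
  rw [← sq_eq_sq₀ (norm_nonneg _) (norm_nonneg _), norm_sub_sq_real, real_inner_smul_left,
    real_inner_smul_right, real_inner_comm, hw, norm_smul, norm_smul, hnorm, mul_pow, mul_pow,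
    Real.norm_eq_abs, Real.norm_eq_abs, sq_abs, sq_abs]
  linear_combination ‖a‖ ^ 2 * Real.sin_sq_add_cos_sq e

variable [CompleteSpace E]
  {f : E → ℝ} {x y D : E} {t : ℝ}

theorem inner_sub_nonneg_of_isMinOn {s : Set E} {z : E} (hs : Convex ℝ s) (hy : y ∈ s)
    (hz : z ∈ s) (hmin : IsMinOn f s y) (hf : HasGradientAt f D y) : 0 ≤ ⟪D, z - y⟫_ℝ := by
  simpa using hmin.localize.hasFDerivWithinAt_nonneg hf.hasFDerivAt.hasFDerivWithinAt
    (sub_mem_posTangentConeAt_of_segment_subset (hs.segment_subset hy hz))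

theorem inner_gradient_sub_eq_of_isMinOn_closedBall (hy : y ∈ Metric.closedBall x t)
    (hmin : IsMinOn f (Metric.closedBall x t) y) (hf : HasGradientAt f D y) :
    ⟪D, x - y⟫_ℝ = t * ‖D‖ := by
  have ht : 0 ≤ t := Metric.nonempty_closedBall.1 ⟨y, hy⟩
  have hsteepest : x - t • NormedSpace.normalize D ∈ Metric.closedBall x t := by
    by_cases hD : D = 0 <;> simp [hD, ht, norm_smul, abs_of_nonneg, NormedSpace.norm_normalize]
  apply le_antisymm
  · calc
      ⟪D, x - y⟫_ℝ ≤ ‖D‖ * ‖x - y‖ := real_inner_le_norm _ _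
      _ ≤ ‖D‖ * t := by gcongr; exact mem_closedBall_iff_norm'.1 hy
      _ = t * ‖D‖ := mul_comm _ _
  · have hle := inner_sub_nonneg_of_isMinOn (convex_closedBall x t) hy hsteepest hmin hf
    rw [sub_right_comm, inner_sub_right, real_inner_smul_right, inner_normalize_self] at hle
    linarith

theorem eq_add_smul_normalize_of_isMinOn_closedBall (hy : y ∈ Metric.closedBall x t)
    (hmin : IsMinOn f (Metric.closedBall x t) y) (hf : HasGradientAt f D y) (hD : D ≠ 0) :
    x = y + t • NormedSpace.normalize D := by
  have hinner : ⟪x - y, NormedSpace.normalize D⟫_ℝ = t := by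
    rw [NormedSpace.normalize, real_inner_smul_right, real_inner_comm,
      inner_gradient_sub_eq_of_isMinOn_closedBall hy hmin hf]
    field_simp [norm_ne_zero_iff.2 hD]
  have hdist : ‖x - y‖ ≤ t := mem_closedBall_iff_norm'.1 hy
  have hsq : ‖x - y - t • NormedSpace.normalize D‖ ^ 2 ≤ 0 := by
    rw [norm_sub_sq_real, real_inner_smul_right, hinner, norm_smul, NormedSpace.norm_normalize hD,
      Real.norm_eq_abs, mul_one, sq_abs]
    nlinarith [norm_nonneg (x - y)]
  rw [← sub_eq_zero, ← sub_sub]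
  exact norm_eq_zero.1 (by nlinarith [norm_nonneg (x - y - t • NormedSpace.normalize D)])

variable {Df : E → E} {H : E →L[ℝ] E} {v : E}

theorem inner_hessian_add_inner_gradient_nonneg (hf : ∀ z, HasGradientAt f (Df z) z)
    (hDf : HasFDerivAt Df H y) (hmin : IsMinOn f (Metric.sphere x ‖x - y‖) y)
    (horth : ⟪x - y, v⟫_ℝ = 0) (hnorm : ‖v‖ = ‖x - y‖) :
    0 ≤ ⟪H v, v⟫_ℝ + ⟪Df y, x - y⟫_ℝ := by
  -- The great circle through `y` in direction `v`; its acceleration at `y` is `x - y`.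
  let γ : ℝ → E := fun e => x + (Real.sin e • v - Real.cos e • (x - y))
  let γ' : ℝ → E := fun e => Real.cos e • v + Real.sin e • (x - y)
  have hγ0 : γ 0 = y := by simp [γ]
  have hγ (e : ℝ) : HasDerivAt γ (γ' e) e := by
    simpa [γ, γ'] using (((Real.hasDerivAt_sin e).smul_const v).sub
      ((Real.hasDerivAt_cos e).smul_const (x - y))).const_add x
  have hγ' : HasDerivAt γ' (x - y) 0 := by
    simpa [γ'] using! ((Real.hasDerivAt_cos 0).smul_const v).add
      ((Real.hasDerivAt_sin 0).smul_const (x - y))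
  have hfγ (e : ℝ) : HasDerivAt (f ∘ γ) ⟪Df (γ e), γ' e⟫_ℝ e :=
    (hf (γ e)).hasFDerivAt.comp_hasDerivAt e (hγ e)
  have hDfγ : HasDerivAt (Df ∘ γ) (H v) 0 := by
    have := (hγ0.symm ▸ hDf).comp_hasDerivAt 0 (hγ 0)
    simpa [γ'] using this
  have hsecond : deriv (deriv (f ∘ γ)) 0 = ⟪H v, v⟫_ℝ + ⟪Df y, x - y⟫_ℝ := by
    rw [funext fun e => (hfγ e).deriv, add_comm]
    refine (hDfγ.inner ℝ hγ').deriv.trans ?_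
    simp [hγ0, γ']
  have hlocal : IsLocalMin (f ∘ γ) 0 := by
    refine .of_forall fun e => ?_
    rw [Function.comp_apply, hγ0]
    exact hmin (by simp [γ, norm_sin_smul_sub_cos_smul horth hnorm])
  exact hsecond ▸ deriv_deriv_nonneg_of_isLocalMin hlocal (hfγ 0).continuousAt

theorem norm_sq_mul_inner_hessian_add_nonneg (hf : ∀ z, HasGradientAt f (Df z) z)
    (hDf : HasFDerivAt Df H y) (hmin : IsMinOn f (Metric.sphere x ‖x - y‖) y)
    (horth : ⟪x - y, v⟫_ℝ = 0) :
    0 ≤ ‖x - y‖ ^ 2 * ⟪H v, v⟫_ℝ + ‖v‖ ^ 2 * ⟪Df y, x - y⟫_ℝ := by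
  by_cases hv : v = 0
  · simp [hv]
  have hv' : ‖v‖ ≠ 0 := norm_ne_zero_iff.2 hv
  have hscaled := inner_hessian_add_inner_gradient_nonneg (v := (‖x - y‖ / ‖v‖) • v) hf hDf hmin
    (by rw [real_inner_smul_right, horth, mul_zero]) (by simp [norm_smul, hv'])
  rw [map_smul, real_inner_smul_left, real_inner_smul_right] at hscaled
  calc
    0 ≤ ‖v‖ ^ 2 * (‖x - y‖ / ‖v‖ * (‖x - y‖ / ‖v‖ * ⟪H v, v⟫_ℝ) + ⟪Df y, x - y⟫_ℝ) := by
      positivity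
    _ = ‖x - y‖ ^ 2 * ⟪H v, v⟫_ℝ + ‖v‖ ^ 2 * ⟪Df y, x - y⟫_ℝ := by field_simp

theorem mul_inner_hessian_add_nonneg_of_isMinOn_closedBall {s : ℝ} (hs : 0 < s)
    (hf : ∀ z, HasGradientAt f (Df z) z) (hDf : HasFDerivAt Df H y) (hDy : Df y ≠ 0)
    (hmin : IsMinOn f (Metric.closedBall (y + s • NormedSpace.normalize (Df y)) s) y)
    (horth : ⟪NormedSpace.normalize (Df y), v⟫_ℝ = 0) :
    0 ≤ s * ⟪H v, v⟫_ℝ + ‖Df y‖ * ‖v‖ ^ 2 := by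
  have hcenter := add_sub_cancel_left y (s • NormedSpace.normalize (Df y))
  have hradius : ‖y + s • NormedSpace.normalize (Df y) - y‖ = s := by
    rw [hcenter, norm_smul, NormedSpace.norm_normalize hDy, Real.norm_of_nonneg hs.le, mul_one]
  have hsecond := norm_sq_mul_inner_hessian_add_nonneg
    (x := y + s • NormedSpace.normalize (Df y)) hf hDf
    (hmin.on_subset (hradius.symm ▸ Metric.sphere_subset_closedBall))
    (by rw [hcenter, real_inner_smul_left, horth, mul_zero])
  rw [hradius, hcenter, real_inner_smul_right, inner_normalize_self] at hsecond
  exact nonneg_of_mul_nonneg_right (by linear_combination hsecond) hs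

theorem eq_zero_of_add_smul_fderiv_normalize_eq_zero {s : ℝ} (ht : 0 < t) (hts : t < s)
    (hf : ∀ z, HasGradientAt f (Df z) z) (hDf : DifferentiableAt ℝ Df y) (hDy : Df y ≠ 0)
    (hmin : IsMinOn f (Metric.closedBall (y + s • NormedSpace.normalize (Df y)) s) y)
    (hv : v + t • fderiv ℝ (fun z => NormedSpace.normalize (Df z)) y v = 0) : v = 0 := by
  rw [fderiv_normalize_comp_apply hDf hDy] at hv
  have hDpos : 0 < ‖Df y‖ := norm_pos_iff.2 hDy
  have horth : ⟪NormedSpace.normalize (Df y), v⟫_ℝ = 0 := by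
    simpa [inner_add_right, inner_sub_right, real_inner_smul_right, NormedSpace.norm_normalize hDy]
      using congrArg (⟪NormedSpace.normalize (Df y), ·⟫_ℝ) hv
  have hcurv : t * ⟪fderiv ℝ Df y v, v⟫_ℝ = -(‖Df y‖ * ‖v‖ ^ 2) := by
    have hvv := congrArg (⟪·, v⟫_ℝ) hv
    simp only [inner_add_left, real_inner_smul_left, inner_sub_left, horth, inner_zero_left,
      real_inner_self_eq_norm_sq] at hvv
    field_simp at hvv
    linarith
  have hsecond := mul_inner_hessian_add_nonneg_of_isMinOn_closedBall (ht.trans hts) hf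
    hDf.hasFDerivAt hDy hmin horth
  have hbound : (s - t) * ‖Df y‖ * ‖v‖ ^ 2 ≤ 0 := by
    linear_combination t * hsecond + s * hcurv
  by_contra hv0
  have hvpos : 0 < ‖v‖ := norm_pos_iff.2 hv0
  exact hbound.not_gt (mul_pos (mul_pos (sub_pos.2 hts) hDpos) (pow_pos hvpos 2))

end Minimizers

section HopfLax

variable {n : ℕ} {g : Euc n → ℝ} {x y z : Euc n} {t : ℝ}

theorem HLu_le (hc : Continuous g) (hz : z ∈ Metric.closedBall x t) : HLu g x t ≤ g z :=
  csInf_le ((isCompact_closedBall x t).image hc).bddBelow (Set.mem_image_of_mem g hz)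

theorem HLL_nonempty (hc : Continuous g) (ht : 0 ≤ t) : (HLL g x t).Nonempty := by
  obtain ⟨y, hy, hgy⟩ := ((isCompact_closedBall x t).image hc).sInf_mem
    ((Metric.nonempty_closedBall.2 ht).image g)
  exact ⟨y, mem_closedBall_iff_norm.1 hy, hgy⟩

theorem mem_HLL_iff (hc : Continuous g) :
    y ∈ HLL g x t ↔ y ∈ Metric.closedBall x t ∧ IsMinOn g (Metric.closedBall x t) y := by
  rw [mem_closedBall_iff_norm]
  refine ⟨fun hy => ⟨hy.1, fun z hz => hy.2.trans_le (HLu_le hc hz)⟩, fun hy => ⟨hy.1, ?_⟩⟩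
  exact (IsLeast.csInf_eq ⟨Set.mem_image_of_mem g (mem_closedBall_iff_norm.2 hy.1),
    Set.forall_mem_image.2 hy.2⟩).symm

theorem mem_HLL_add_smul_of_le (hc : Continuous g) {P : Euc n} (hP : ‖P‖ = 1) {s : ℝ} (hs : 0 ≤ s)
    (hst : s ≤ t) (hy : y ∈ HLL g (y + t • P) t) : y ∈ HLL g (y + s • P) s := by
  rw [mem_HLL_iff hc] at hy ⊢
  refine ⟨by simp [norm_smul, hP, abs_of_nonneg hs], hy.2.on_subset ?_⟩
  apply Metric.closedBall_subset_closedBall'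
  rw [dist_add_left, dist_eq_norm, ← sub_smul, norm_smul, hP, Real.norm_of_nonpos (by linarith)]
  linarith

theorem ofReal_le_sInf_of_mem_HLL (hc : Continuous g) {P : Euc n} (hP : ‖P‖ = 1)
    (hy : y ∈ HLL g (y + t • P) t) :
    ENNReal.ofReal t ≤ sInf (ENNReal.ofReal '' {s : ℝ | 0 < s ∧ y ∉ HLL g (y + s • P) s}) := by
  refine le_sInf (Set.forall_mem_image.2 fun s ⟨hs, hys⟩ => ENNReal.ofReal_le_ofReal ?_)
  by_contra! hst
  exact hys (mem_HLL_add_smul_of_le hc hP hs.le hst.le hy)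

theorem eventually_notMem_HLL (hc : Continuous g) {p : Euc n × ℝ}
    (hu : ContinuousAt (Function.uncurry (HLu g)) p) (hy : y ∉ HLL g p.1 p.2) :
    ∀ᶠ w : (Euc n × ℝ) × Euc n in 𝓝 (p, y), w.2 ∉ HLL g w.1.1 w.1.2 := by
  by_cases hyp : ‖y - p.1‖ ≤ p.2
  · have hgap : g y - Function.uncurry (HLu g) p ≠ 0 := sub_ne_zero.2 fun h => hy ⟨hyp, h⟩
    have hcont : ContinuousAt (fun w : (Euc n × ℝ) × Euc n =>
        g w.2 - Function.uncurry (HLu g) w.1) (p, y) :=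
      (by fun_prop : ContinuousAt (fun w : (Euc n × ℝ) × Euc n => g w.2) (p, y)).sub
        (ContinuousAt.comp (f := Prod.fst) (x := (p, y)) hu continuousAt_fst)
    filter_upwards [hcont.eventually_ne hgap] with w hw hwL using hw (sub_eq_zero.2 hwL.2)
  · have hfar : ∀ᶠ w : (Euc n × ℝ) × Euc n in 𝓝 (p, y), w.1.2 < ‖w.2 - w.1.1‖ :=
      (isOpen_lt (by fun_prop) (by fun_prop)).mem_nhds (not_le.1 hyp)
    filter_upwards [hfar] with w hw hwL using hw.not_ge hwL.1

theorem eventually_HLL_subset (hc : Continuous g) {p : Euc n × ℝ}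
    (hu : ContinuousAt (Function.uncurry (HLu g)) p) {V : Set (Euc n)} (hV : IsOpen V)
    (hL : HLL g p.1 p.2 ⊆ V) : ∀ᶠ q in 𝓝 p, HLL g q.1 q.2 ⊆ V := by
  have hK : IsCompact (Metric.closedBall p.1 (p.2 + 1) \ V) := (isCompact_closedBall _ _).diff hV
  have hfar : ∀ᶠ q in 𝓝 p, ∀ y ∈ Metric.closedBall p.1 (p.2 + 1) \ V, y ∉ HLL g q.1 q.2 :=
    hK.eventually_forall_of_forall_eventually fun y hy =>
      eventually_notMem_HLL hc hu fun hyL => hy.2 (hL hyL)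
  have hnear : ∀ᶠ q in 𝓝 p, q.2 + dist q.1 p.1 < p.2 + 1 :=
    (isOpen_lt (by fun_prop) (by fun_prop)).mem_nhds (by simp)
  filter_upwards [hfar, hnear] with q hqfar hqnear y hy
  by_contra hyV
  exact hqfar y ⟨Metric.closedBall_subset_closedBall' hqnear.le (mem_closedBall_iff_norm.2 hy.1),
    hyV⟩ hy

theorem eventually_HLu_eq_of_HLL_subset_ball (hc : Continuous g) (ht : 0 < t)
    (hu : ContinuousAt (Function.uncurry (HLu g)) (x, t)) (hL : HLL g x t ⊆ Metric.ball x t) :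
    Function.uncurry (HLu g) =ᶠ[𝓝 (x, t)] fun _ => HLu g x t := by
  obtain ⟨z, hz⟩ := HLL_nonempty hc ht.le (x := x)
  have hzdist : dist z x < t := hL hz
  have hzball : ∀ᶠ q : Euc n × ℝ in 𝓝 (x, t), dist z q.1 < q.2 :=
    (isOpen_lt (by fun_prop) (by fun_prop)).mem_nhds hzdist
  filter_upwards [hzball, eventually_HLL_subset hc hu Metric.isOpen_ball hL,
    continuousAt_snd.eventually_const_lt ht] with q hzq hLq hq
  obtain ⟨w, hw⟩ := HLL_nonempty hc hq.le (x := q.1)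
  apply le_antisymm
  · exact (HLu_le hc hzq.le).trans_eq hz.2
  · exact (HLu_le hc (Metric.ball_subset_closedBall (hLq hw))).trans_eq hw.2

end HopfLax

section Characteristics

variable {n : ℕ} {g : Euc n → ℝ} {Dg : Euc n → Euc n} {x y z : Euc n} {t : ℝ}

theorem eq_charX_of_mem_HLL (hg : ∀ y, HasGradientAt g (Dg y) y) (hy : y ∈ HLL g x t)
    (hDy : Dg y ≠ 0) : x = charX Dg y t := by
  obtain ⟨hball, hmin⟩ := (mem_HLL_iff (continuous_of_hasGradientAt hg)).1 hy
  exact eq_add_smul_normalize_of_isMinOn_closedBall hball hmin (hg y) hDy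

/-- The differential `(v, σ) ↦ ⟪w, v⟫ - σ ‖w‖` on space-time of a solution of `uₜ + |∇u| = 0` whose
spatial gradient is `w`. -/
def eikonalDifferential (w : Euc n) : Euc n × ℝ →L[ℝ] ℝ :=
  innerSL ℝ w ∘L .fst ℝ (Euc n) ℝ - ‖w‖ • .snd ℝ (Euc n) ℝ

theorem eikonalDifferential_injective :
    Function.Injective (eikonalDifferential : Euc n → Euc n × ℝ →L[ℝ] ℝ) := fun w₁ w₂ h =>
  ext_inner_right ℝ fun v => by simpa [eikonalDifferential] using congrArg (· (v, 0)) h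

theorem contDiffAt_eikonalDifferential {m : WithTop ℕ∞} {w : Euc n} (hw : w ≠ 0) :
    ContDiffAt ℝ m (eikonalDifferential : Euc n → Euc n × ℝ →L[ℝ] ℝ) w :=
  ((innerSL ℝ).contDiff.contDiffAt.clm_comp contDiffAt_const).sub
    ((contDiffAt_norm ℝ hw).smul contDiffAt_const)

theorem eq_eikonalDifferential_of_mem_HLL (hg : ∀ y, HasGradientAt g (Dg y) y) (ht : 0 < t)
    (hy : y ∈ HLL g x t) {A : Euc n × ℝ →L[ℝ] ℝ}
    (hA : HasFDerivAt (Function.uncurry (HLu g)) A (x, t)) : A = eikonalDifferential (Dg y) := by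
  have hc := continuous_of_hasGradientAt hg
  obtain ⟨hball, hmin⟩ := (mem_HLL_iff hc).1 hy
  -- Since `‖P‖ ≤ 1`, the function `(z, r) ↦ g (z - r • P)` touches `u` from above at `(x, t)`.
  let P : Euc n := t⁻¹ • (x - y)
  have hP : ‖P‖ ≤ 1 := by
    rw [norm_smul, norm_inv, Real.norm_of_nonneg ht.le, inv_mul_le_one₀ ht]
    exact mem_closedBall_iff_norm'.1 hball
  have hDP : ⟪Dg y, P⟫_ℝ = ‖Dg y‖ := by
    rw [real_inner_smul_right, inner_gradient_sub_eq_of_isMinOn_closedBall hball hmin (hg y),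
      inv_mul_cancel_left₀ ht.ne']
  let foot : Euc n × ℝ →L[ℝ] Euc n := .fst ℝ (Euc n) ℝ - (.smulRight (.snd ℝ (Euc n) ℝ) P)
  have hfoot : foot (x, t) = y := by simp [foot, P, smul_smul, ht.ne']
  have hgfoot : HasFDerivAt g (innerSL ℝ (Dg y)) (foot (x, t)) := hfoot ▸ (hg y).hasFDerivAt
  have hdiff := (hgfoot.comp (x, t) foot.hasFDerivAt).sub hA
  have hlocal : IsLocalMin (g ∘ foot - Function.uncurry (HLu g)) (x, t) := by
    filter_upwards [continuousAt_snd.eventually_const_lt ht] with q hq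
    have hle : HLu g q.1 q.2 ≤ g (foot q) := HLu_le hc <| by
      have := mul_le_of_le_one_right hq.le hP
      simpa [foot, norm_smul, abs_of_pos hq] using this
    simpa [Function.uncurry, hfoot, hy.2] using hle
  rw [← sub_eq_zero.1 (hlocal.hasFDerivAt_eq_zero hdiff)]
  ext v
  · simp [foot, eikonalDifferential]
  · simp [foot, eikonalDifferential, hDP]

theorem gradient_eq_of_mem_HLL (hg : ∀ y, HasGradientAt g (Dg y) y) (ht : 0 < t)
    (hd : DifferentiableAt ℝ (Function.uncurry (HLu g)) (x, t)) (hy : y ∈ HLL g x t)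
    (hz : z ∈ HLL g x t) : Dg z = Dg y :=
  eikonalDifferential_injective <|
    (eq_eikonalDifferential_of_mem_HLL hg ht hz hd.hasFDerivAt).symm.trans
      (eq_eikonalDifferential_of_mem_HLL hg ht hy hd.hasFDerivAt)

theorem HLL_eq_singleton_of_gradient_ne_zero (hg : ∀ y, HasGradientAt g (Dg y) y) (ht : 0 < t)
    (hd : DifferentiableAt ℝ (Function.uncurry (HLu g)) (x, t)) (hy : y ∈ HLL g x t)
    (hDy : Dg y ≠ 0) : HLL g x t = {y} := by
  refine Set.eq_singleton_iff_unique_mem.2 ⟨hy, fun z hz => ?_⟩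
  have hDz : Dg z = Dg y := gradient_eq_of_mem_HLL hg ht hd hy hz
  have hxz := eq_charX_of_mem_HLL hg hz (hDz ▸ hDy)
  rw [eq_charX_of_mem_HLL hg hy hDy, charX, charX, hDz] at hxz
  exact (add_right_cancel hxz).symm

theorem mem_ball_of_notMem_P0set (hc : Continuous g) (ht : 0 < t) (hP : (x, t) ∉ P0set g Dg)
    (hy : y ∈ HLL g x t) (hDy : Dg y = 0) : y ∈ Metric.ball x t := by
  by_contra hball
  have hdist : ‖x - y‖ = t :=
    le_antisymm (norm_sub_rev x y ▸ hy.1) (not_lt.1 fun h => hball (mem_ball_iff_norm'.2 h))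
  have hunit : ‖t⁻¹ • (x - y)‖ = 1 := by
    rw [norm_smul, hdist, norm_inv, Real.norm_of_nonneg ht.le, inv_mul_cancel₀ ht.ne']
  have hx : x = y + t • t⁻¹ • (x - y) := by simp [smul_smul, ht.ne']
  exact hP ⟨y, t⁻¹ • (x - y), t, hDy, hunit, ht,
    ofReal_le_sInf_of_mem_HLL hc hunit (hx ▸ hy), Prod.ext hx rfl⟩

theorem exists_gt_mem_HLL_of_notMem_T1 (hg : ∀ y, HasGradientAt g (Dg y) y) (ht : 0 < t)
    (hT : (x, t) ∉ T1 g Dg) (hL : HLL g x t = {y}) (hDy : Dg y ≠ 0) :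
    ∃ s > t, y ∈ HLL g (charX Dg y s) s := by
  have hy : y ∈ HLL g x t := hL ▸ Set.mem_singleton y
  have hx : x = charX Dg y t := eq_charX_of_mem_HLL hg hy hDy
  have hyt : y ∈ HLL g (charX Dg y t) t := hx ▸ hy
  have htsnd : ENNReal.ofReal t ≤ tsnd g Dg y :=
    ofReal_le_sInf_of_mem_HLL (continuous_of_hasGradientAt hg) (NormedSpace.norm_normalize hDy) hyt
  have htbar : ENNReal.ofReal t < tbar g Dg y := by
    by_contra! hle
    exact hT ⟨⟨y, t, hDy, hle.trans_lt ENNReal.ofReal_lt_top, ht, hle, htsnd, Prod.ext hx rfl⟩,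
      y, hL⟩
  obtain ⟨_, ⟨s, ⟨hs, hLs⟩, rfl⟩, hts⟩ := lt_sSup_iff.1 htbar
  exact ⟨s, (ENNReal.ofReal_lt_ofReal_iff hs).1 hts, hLs ▸ Set.mem_singleton y⟩

end Characteristics

section Regularity

variable {n : ℕ} {g : Euc n → ℝ} {Dg : Euc n → Euc n} {x y : Euc n} {s t : ℝ} {m : WithTop ℕ∞}

/-- The space-time flow `(y, t) ↦ (X(y, t), t)` of the characteristics, whose local inverse recovers
the minimizer from the point of evaluation. -/
def charFlow (Dg : Euc n → Euc n) (w : Euc n × ℝ) : Euc n × ℝ :=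
  (charX Dg w.1 w.2, w.2)

theorem contDiffAt_charFlow (hDg : ContDiffAt ℝ m Dg y) (hDy : Dg y ≠ 0) :
    ContDiffAt ℝ m (charFlow Dg) (y, t) := by
  have hnormal : ContDiffAt ℝ m (fun w : Euc n × ℝ => NormedSpace.normalize (Dg w.1)) (y, t) :=
    ContDiffAt.comp (f := Prod.fst) (y, t) ((contDiffAt_normalize hDy).comp y hDg) contDiffAt_fst
  exact (contDiffAt_fst.add (contDiffAt_snd.smul hnormal)).prodMk contDiffAt_snd

theorem fderiv_charFlow_apply (hDg : DifferentiableAt ℝ Dg y) (hDy : Dg y ≠ 0) (v : Euc n) (σ : ℝ) :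
    fderiv ℝ (charFlow Dg) (y, t) (v, σ) =
      (v + (t • fderiv ℝ (fun z => NormedSpace.normalize (Dg z)) y v +
        σ • NormedSpace.normalize (Dg y)), σ) := by
  have hnormal : HasFDerivAt (fun z => NormedSpace.normalize (Dg z))
      (fderiv ℝ (fun z => NormedSpace.normalize (Dg z)) y) (y, t).1 :=
    ((hasFDerivAt_normalize hDy).differentiableAt.comp y hDg).hasFDerivAt
  have hflow := (hasFDerivAt_fst.add
    (hasFDerivAt_snd.smul (hnormal.comp (y, t) hasFDerivAt_fst))).prodMk hasFDerivAt_snd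
  rw [HasFDerivAt.fderiv (f := charFlow Dg) hflow]
  simp

theorem fderiv_charFlow_injective (ht : 0 < t) (hts : t < s)
    (hg : ∀ y, HasGradientAt g (Dg y) y) (hDg : DifferentiableAt ℝ Dg y) (hDy : Dg y ≠ 0)
    (hys : y ∈ HLL g (charX Dg y s) s) :
    Function.Injective (fderiv ℝ (charFlow Dg) (y, t)) := by
  refine (injective_iff_map_eq_zero _).2 fun ⟨v, σ⟩ hker => ?_
  rw [fderiv_charFlow_apply hDg hDy] at hker
  obtain rfl : σ = 0 := congrArg Prod.snd hker
  have hv : v + t • fderiv ℝ (fun z => NormedSpace.normalize (Dg z)) y v = 0 := by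
    simpa using congrArg Prod.fst hker
  have hmin := ((mem_HLL_iff (continuous_of_hasGradientAt hg)).1 hys).2
  rw [eq_zero_of_add_smul_fderiv_normalize_eq_zero ht hts hg hDg hDy hmin hv, Prod.mk_zero_zero]

theorem eventually_eq_charFlow (hg : ∀ y, HasGradientAt g (Dg y) y)
    (hDg : ContinuousAt Dg y) (hDy : Dg y ≠ 0)
    (hu : ContinuousAt (Function.uncurry (HLu g)) (x, t)) (hL : HLL g x t = {y})
    {S : Set (Euc n × ℝ)} (hS : S ∈ 𝓝 (y, t)) :
    ∀ᶠ q in 𝓝 (x, t), ∀ z ∈ HLL g q.1 q.2, (z, q.2) ∈ S ∧ q = charFlow Dg (z, q.2) := by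
  obtain ⟨V, hV, I, hI, hVI⟩ := mem_nhds_prod_iff.1 hS
  have hVDg : V ∩ {z | Dg z ≠ 0} ∈ 𝓝 y := inter_mem hV (hDg.eventually_ne hDy)
  have hsub : HLL g x t ⊆ interior (V ∩ {z | Dg z ≠ 0}) := by
    rwa [hL, Set.singleton_subset_iff, mem_interior_iff_mem_nhds]
  filter_upwards [eventually_HLL_subset (continuous_of_hasGradientAt hg) hu isOpen_interior hsub,
    continuousAt_snd.eventually hI] with q hLq hqI z hz
  obtain ⟨hzV, hDz⟩ := interior_subset (hLq hz)
  exact ⟨hVI ⟨hzV, hqI⟩, Prod.ext (eq_charX_of_mem_HLL hg hz hDz) rfl⟩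

theorem exists_contDiffAt_minimizer (hm : m ≠ 0) (ht : 0 < t) (hts : t < s)
    (hg : ∀ y, HasGradientAt g (Dg y) y) (hDg : ContDiffAt ℝ m Dg y) (hDy : Dg y ≠ 0)
    (hu : ContinuousAt (Function.uncurry (HLu g)) (x, t)) (hL : HLL g x t = {y})
    (hys : y ∈ HLL g (charX Dg y s) s) :
    ∃ η : Euc n × ℝ → Euc n, ContDiffAt ℝ m η (x, t) ∧ η (x, t) = y ∧
      ∀ᶠ q in 𝓝 (x, t), η q ∈ HLL g q.1 q.2 := by
  have hflow : charFlow Dg (y, t) = (x, t) :=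
    Prod.ext (eq_charX_of_mem_HLL hg (hL ▸ Set.mem_singleton y) hDy).symm rfl
  obtain ⟨ψ, hψ, hψy, hleft⟩ := exists_contDiffAt_eventually_leftInverse hm
    (contDiffAt_charFlow hDg hDy)
    (fderiv_charFlow_injective ht hts hg (hDg.differentiableAt hm) hDy hys)
  rw [hflow] at hψ hψy
  refine ⟨fun q => (ψ q).1, hψ.fst, congrArg Prod.fst hψy, ?_⟩
  filter_upwards [eventually_eq_charFlow hg hDg.continuousAt hDy hu hL hleft,
    continuousAt_snd.eventually_const_lt ht] with q hq hqpos
  obtain ⟨z, hz⟩ := HLL_nonempty (continuous_of_hasGradientAt hg) hqpos.le (x := q.1)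
  obtain ⟨hψz, hqz⟩ := hq z hz
  rw [hqz, show ψ (charFlow Dg (z, q.2)) = (z, q.2) from hψz, ← hqz]
  exact hz

theorem contDiffAt_succ_HLu_of_contDiffAt_minimizer {m : ℕ} (hm : m ≠ 0)
    (hgm : ContDiff ℝ (m + 1) g) (hg : ∀ y, HasGradientAt g (Dg y) y) (ht : 0 < t)
    {η : Euc n × ℝ → Euc n} (hη : ContDiffAt ℝ m η (x, t))
    (hηL : ∀ᶠ q in 𝓝 (x, t), η q ∈ HLL g q.1 q.2) (hDη : Dg (η (x, t)) ≠ 0) :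
    ContDiffAt ℝ (m + 1) (Function.uncurry (HLu g)) (x, t) := by
  have huη : Function.uncurry (HLu g) =ᶠ[𝓝 (x, t)] g ∘ η := hηL.mono fun q hq => hq.2.symm
  have hum : ContDiffAt ℝ m (Function.uncurry (HLu g)) (x, t) :=
    ((hgm.of_le le_self_add).contDiffAt.comp _ hη).congr_of_eventuallyEq huη
  have hderiv : ∀ᶠ q in 𝓝 (x, t),
      HasFDerivAt (Function.uncurry (HLu g)) (eikonalDifferential (Dg (η q))) q := by
    filter_upwards [hum.eventually (by simp), hηL, continuousAt_snd.eventually_const_lt ht]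
      with q hqm hqL hqpos
    have hq := (hqm.differentiableAt (Nat.cast_ne_zero.2 hm)).hasFDerivAt
    exact hq.congr_fderiv (eq_eikonalDifferential_of_mem_HLL hg hqpos hqL hq)
  have hDgη : ContDiffAt ℝ m (Dg ∘ η) (x, t) :=
    (contDiff_gradient_of_contDiff_succ hgm hg).contDiffAt.comp _ hη
  exact contDiffAt_succ_iff_hasFDerivAt.2 ⟨_, ⟨_, hderiv, fun _ => id⟩,
    ContDiffAt.comp (f := Dg ∘ η) (x, t) (contDiffAt_eikonalDifferential hDη) hDgη⟩

theorem contDiffAt_HLu_of_gradient_eq_zero (hg : ∀ y, HasGradientAt g (Dg y) y) (ht : 0 < t)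
    (hd : DifferentiableAt ℝ (Function.uncurry (HLu g)) (x, t)) (hP : (x, t) ∉ P0set g Dg)
    (hy : y ∈ HLL g x t) (hDy : Dg y = 0) : ContDiffAt ℝ m (Function.uncurry (HLu g)) (x, t) := by
  have hc := continuous_of_hasGradientAt hg
  have hL : HLL g x t ⊆ Metric.ball x t := fun z hz =>
    mem_ball_of_notMem_P0set hc ht hP hz ((gradient_eq_of_mem_HLL hg ht hd hy hz).trans hDy)
  exact contDiffAt_const.congr_of_eventuallyEq
    (eventually_HLu_eq_of_HLL_subset_ball hc ht hd.continuousAt hL)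

theorem contDiffAt_succ_HLu_of_gradient_ne_zero {m : ℕ} (hm : m ≠ 0)
    (hgm : ContDiff ℝ (m + 1) g) (hg : ∀ y, HasGradientAt g (Dg y) y) (ht : 0 < t)
    (hd : DifferentiableAt ℝ (Function.uncurry (HLu g)) (x, t)) (hT : (x, t) ∉ T1 g Dg)
    (hy : y ∈ HLL g x t) (hDy : Dg y ≠ 0) :
    ContDiffAt ℝ (m + 1) (Function.uncurry (HLu g)) (x, t) := by
  have hL : HLL g x t = {y} := HLL_eq_singleton_of_gradient_ne_zero hg ht hd hy hDy
  obtain ⟨s, hts, hys⟩ := exists_gt_mem_HLL_of_notMem_T1 hg ht hT hL hDy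
  obtain ⟨η, hη, rfl, hηL⟩ := exists_contDiffAt_minimizer (Nat.cast_ne_zero.2 hm) ht hts hg
    (contDiff_gradient_of_contDiff_succ hgm hg).contDiffAt hDy hd.continuousAt hL hys
  exact contDiffAt_succ_HLu_of_contDiffAt_minimizer hm hgm hg ht hη hηL hDy

end Regularity

theorem Ck_regularity_off_singular_set {n k : ℕ} (hn : 0 < n) (hk : 2 ≤ k)
    (g : Euc n → ℝ) (Dg : Euc n → Euc n)
    (hgk : ContDiff ℝ k g) (hg : ∀ y, HasGradientAt g (Dg y) y) :
    ∀ p : Euc n × ℝ, 0 < p.2 → p ∉ SigmaSet g ∪ T1 g Dg ∪ P0set g Dg →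
      ∃ U : Set (Euc n × ℝ), IsOpen U ∧ p ∈ U ∧ U ⊆ {q : Euc n × ℝ | 0 < q.2} ∧
        ContDiffOn ℝ k (fun q : Euc n × ℝ => HLu g q.1 q.2) U := by
  rintro ⟨x, t⟩ ht hp
  simp only [Set.mem_union, not_or] at hp
  obtain ⟨⟨hS, hT⟩, hP⟩ := hp
  have hd : DifferentiableAt ℝ (Function.uncurry (HLu g)) (x, t) :=
    not_not.1 fun hnd => hS ⟨ht, hnd⟩
  obtain ⟨y, hy⟩ := HLL_nonempty hgk.continuous (le_of_lt ht) (x := x)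
  obtain ⟨m, rfl⟩ : ∃ m, k = m + 1 := ⟨k - 1, by omega⟩
  have hu : ContDiffAt ℝ (m + 1 : ℕ) (Function.uncurry (HLu g)) (x, t) := by
    by_cases hDy : Dg y = 0
    · exact contDiffAt_HLu_of_gradient_eq_zero hg ht hd hP hy hDy
    · exact contDiffAt_succ_HLu_of_gradient_ne_zero (by omega) hgk hg ht hd hT hy hDy
  obtain ⟨U, hU, hUopen, hpU⟩ := eventually_nhds_iff.1
    ((hu.eventually (by simp)).and (continuousAt_snd.eventually_const_lt ht))
  exact ⟨U, hUopen, hpU, fun q hq => (hU q hq).2, fun q hq => (hU q hq).1.contDiffWithinAt⟩
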